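/- Let E be a lattice effect algebra and define x·y := ((x'∧y)⊕y')' for all x,y ∈ E. Then for all a, b, c ∈ E: [(a·b')'·b']'·c = [((a·c)·(b·c)')'·(b·c)']' (i.e., the identity (NG7) holds in (E;·,',0,1)). -/

import Mathlib

/-- An effect algebra: a partial algebra (E;⊕,',0,1). The partial operation ⊕ is
modeled by a definedness predicate `D` together with a total function `add` whose
value is only meaningful on defined pairs. -/
structure EffectAlgebra (E : Type*) where
  /-- definedness of `x ⊕ y` -/
  D : E → E → Prop
  /-- the value of `x ⊕ y` (meaningful only when `D x y`) -/
  add : E → E → E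
  zero : E
  one : E
  /-- the complement `x'` -/
  compl : E → E
  /-- (E1) commutativity -/
  E1 : ∀ x y, D x y → D y x ∧ add x y = add y x
  /-- (E2) associativity -/
  E2 : ∀ x y z, D x y → D (add x y) z →
    D y z ∧ D x (add y z) ∧ add (add x y) z = add x (add y z)
  /-- (E3) existence of the complement -/
  E3a : ∀ x, D x (compl x)
  E3b : ∀ x, add x (compl x) = one
  /-- (E3) uniqueness of the complement -/
  E3c : ∀ x y, D x y → add x y = one → y = compl x
  /-- (E4) -/
  E4 : ∀ x, D x one → x = zero

/-- The induced order of an effect algebra: `a ≤ b` iff `a ⊕ c = b` for some `c`. -/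
def EffectAlgebra.le {E : Type*} (A : EffectAlgebra E) (a b : E) : Prop :=
  ∃ c, A.D a c ∧ A.add a c = b

/-- A lattice effect algebra: an effect algebra whose induced order is a lattice,
with meet `inf` and join `sup`. -/
structure LatticeEffectAlgebra (E : Type*) extends EffectAlgebra E where
  inf : E → E → E
  sup : E → E → E
  inf_le_left : ∀ a b, toEffectAlgebra.le (inf a b) a
  inf_le_right : ∀ a b, toEffectAlgebra.le (inf a b) b
  le_inf : ∀ a b c, toEffectAlgebra.le c a → toEffectAlgebra.le c b →
    toEffectAlgebra.le c (inf a b)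
  le_sup_left : ∀ a b, toEffectAlgebra.le a (sup a b)
  le_sup_right : ∀ a b, toEffectAlgebra.le b (sup a b)
  sup_le : ∀ a b c, toEffectAlgebra.le a c → toEffectAlgebra.le b c →
    toEffectAlgebra.le (sup a b) c

/-- The total operation `x·y := ((x'∧y)⊕y')'` on a lattice effect algebra
(well defined since `x'∧y ≤ y`). -/
def LatticeEffectAlgebra.prod {E : Type*} (A : LatticeEffectAlgebra E) (x y : E) : E :=
  A.compl (A.add (A.inf (A.compl x) y) (A.compl y))


namespace EffectAlgebra

variable {E : Type*} (A : EffectAlgebra E)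

theorem D_symm {x y : E} (h : A.D x y) : A.D y x := (A.E1 x y h).1

theorem add_comm_of_D {x y : E} (h : A.D x y) : A.add x y = A.add y x := (A.E1 x y h).2

theorem compl_compl (x : E) : A.compl (A.compl x) = x :=
  (A.E3c _ _ (A.D_symm (A.E3a x)) ((A.add_comm_of_D (A.E3a x)).symm.trans (A.E3b x))).symm

theorem add_left_comm_of_D {x y z : E} (hxy : A.D x y) (hxyz : A.D (A.add x y) z) :
    A.D x z ∧ A.D y (A.add x z) ∧ A.add (A.add x y) z = A.add y (A.add x z) := by
  rw [A.add_comm_of_D hxy] at hxyz ⊢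
  exact A.E2 y x z (A.D_symm hxy) hxyz

/-- A summand is recovered from the other summand and the complement of the sum. -/
theorem eq_compl_add_compl {x y : E} (h : A.D x y) :
    y = A.compl (A.add x (A.compl (A.add x y))) := by
  obtain ⟨-, hD, heq⟩ := A.add_left_comm_of_D h (A.E3a (A.add x y))
  exact A.E3c _ _ (A.D_symm hD)
    ((A.add_comm_of_D hD).symm.trans (heq.symm.trans (A.E3b _)))

theorem add_left_cancel_of_D {x y z : E} (hy : A.D x y) (hz : A.D x z)
    (h : A.add x y = A.add x z) : y = z := by
  rw [A.eq_compl_add_compl hy, h, ← A.eq_compl_add_compl hz]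

theorem compl_one : A.compl A.one = A.zero := A.E4 _ (A.D_symm (A.E3a A.one))

theorem D_zero_one : A.D A.zero A.one := by
  rw [← A.compl_one]
  exact A.D_symm (A.E3a A.one)

theorem D_zero_and_add_zero (x : E) : A.D x A.zero ∧ A.add x A.zero = x := by
  have h1 : A.D (A.add (A.compl x) x) A.zero := by
    rw [← A.add_comm_of_D (A.E3a x), A.E3b]
    exact A.D_symm A.D_zero_one
  obtain ⟨hx, hD, heq⟩ := A.E2 _ _ _ (A.D_symm (A.E3a x)) h1
  refine ⟨hx, ?_⟩
  rw [← A.add_comm_of_D (A.E3a x), A.E3b] at heq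
  have h2 : A.add A.one A.zero = A.one := by
    rw [← A.compl_one]
    exact A.E3b _
  rw [A.E3c _ _ hD (heq.symm.trans h2), A.compl_compl]

theorem le_antisymm {x y : E} (hxy : A.le x y) (hyx : A.le y x) : x = y := by
  obtain ⟨c, hc, rfl⟩ := hxy
  obtain ⟨d, hd, h⟩ := hyx
  obtain ⟨hcd, hD, heq⟩ := A.E2 _ _ _ hc hd
  obtain ⟨h0, hx0⟩ := A.D_zero_and_add_zero x
  have hz : A.add c d = A.zero :=
    A.add_left_cancel_of_D hD h0 (heq.symm.trans (h.trans hx0.symm))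
  have hD1 : A.D (A.add c d) A.one := hz ▸ A.D_zero_one
  rw [A.E4 c (A.add_left_comm_of_D hcd hD1).1, hx0]

theorem le_refl (x : E) : A.le x x := ⟨A.zero, A.D_zero_and_add_zero x⟩

theorem le_trans {x y z : E} (hxy : A.le x y) (hyz : A.le y z) : A.le x z := by
  obtain ⟨c, hc, rfl⟩ := hxy
  obtain ⟨d, hd, rfl⟩ := hyz
  obtain ⟨-, hD, heq⟩ := A.E2 _ _ _ hc hd
  exact ⟨_, hD, heq.symm⟩

theorem add_le_add_right_of_D {x y z : E} (hxy : A.le x y) (hD : A.D y z) :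
    A.D x z ∧ A.le (A.add x z) (A.add y z) := by
  obtain ⟨c, hc, rfl⟩ := hxy
  obtain ⟨hxz, hD', heq⟩ := A.add_left_comm_of_D hc hD
  exact ⟨hxz, c, A.D_symm hD', by rw [heq, A.add_comm_of_D hD']⟩

theorem le_of_add_le_add_left {x y z : E} (hx : A.D z x) (hy : A.D z y)
    (h : A.le (A.add z x) (A.add z y)) : A.le x y := by
  obtain ⟨t, ht, heq⟩ := h
  obtain ⟨hxt, hD, hassoc⟩ := A.E2 _ _ _ hx ht
  exact ⟨t, hxt, A.add_left_cancel_of_D hD hy (hassoc.symm.trans heq)⟩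

theorem D_compl_of_le {x y : E} (h : A.le x y) : A.D x (A.compl y) :=
  (A.add_le_add_right_of_D h (A.E3a y)).1

theorem compl_le_of_compl_le {x y : E} (h : A.le (A.compl x) y) : A.le (A.compl y) x := by
  obtain ⟨c, hc, rfl⟩ := h
  obtain ⟨hD, hD', heq⟩ := A.E2 _ _ _ hc (A.E3a _)
  have hx : A.add c (A.compl (A.add (A.compl x) c)) = x := by
    rw [A.E3c _ _ hD' (heq.symm.trans (A.E3b _)), A.compl_compl]
  exact ⟨c, A.D_symm hD, (A.add_comm_of_D hD).symm.trans hx⟩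

end EffectAlgebra

namespace LatticeEffectAlgebra

variable {E : Type*} (A : LatticeEffectAlgebra E)

theorem D_inf_compl (x y : E) : A.D (A.inf x y) (A.compl y) :=
  A.D_compl_of_le (A.inf_le_right x y)

theorem compl_le_inf_add_compl (x y : E) :
    A.le (A.compl y) (A.add (A.inf x y) (A.compl y)) :=
  ⟨_, A.D_symm (A.D_inf_compl x y), (A.add_comm_of_D (A.D_inf_compl x y)).symm⟩

theorem inf_eq_left {x y : E} (h : A.le x y) : A.inf x y = x :=
  A.le_antisymm (A.inf_le_left x y) (A.le_inf _ _ _ (A.le_refl x) h)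

theorem prod_le_right (x y : E) : A.le (A.prod x y) y :=
  A.compl_le_of_compl_le (A.compl_le_inf_add_compl _ y)

theorem prod_compl_prod (x y : E) :
    A.prod (A.compl (A.prod x y)) y = A.inf (A.compl x) y := by
  have hD := A.D_inf_compl (A.compl x) y
  rw [prod, A.compl_compl, A.inf_eq_left (A.prod_le_right x y),
    A.add_comm_of_D (A.D_compl_of_le (A.prod_le_right x y)), prod, A.add_comm_of_D hD]
  exact (A.eq_compl_add_compl (A.D_symm hD)).symm

/-- Adding `c'` preserves binary meets of elements below `c`. -/
theorem inf_inf_add_compl (x y c : E) :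
    A.add (A.inf (A.inf x y) c) (A.compl c) =
      A.inf (A.add (A.inf x c) (A.compl c)) (A.add (A.inf y c) (A.compl c)) := by
  have hx := A.D_inf_compl x c
  have hy := A.D_inf_compl y c
  have hxy := A.D_inf_compl (A.inf x y) c
  apply A.le_antisymm
  · refine A.le_inf _ _ _ (A.add_le_add_right_of_D ?_ hx).2 (A.add_le_add_right_of_D ?_ hy).2
    · exact A.le_inf _ _ _ (A.le_trans (A.inf_le_left _ _) (A.inf_le_left _ _))
        (A.inf_le_right _ _)
    · exact A.le_inf _ _ _ (A.le_trans (A.inf_le_left _ _) (A.inf_le_right _ _))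
        (A.inf_le_right _ _)
  · obtain ⟨d, hd, heq⟩ := A.le_inf _ _ _ (A.compl_le_inf_add_compl x c)
      (A.compl_le_inf_add_compl y c)
    have below {z : E} (hz : A.le (A.add (A.compl c) d) (A.add (A.inf z c) (A.compl c))) :
        A.le d (A.inf z c) := by
      rw [A.add_comm_of_D (A.D_inf_compl z c)] at hz
      exact A.le_of_add_le_add_left hd (A.D_symm (A.D_inf_compl z c)) hz
    have hdx := below (heq ▸ A.inf_le_left _ _)
    have hdy := below (heq ▸ A.inf_le_right _ _)
    rw [← heq, A.add_comm_of_D hd]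
    exact (A.add_le_add_right_of_D (A.le_inf _ _ _
      (A.le_inf _ _ _ (A.le_trans hdx (A.inf_le_left _ _)) (A.le_trans hdy (A.inf_le_left _ _)))
      (A.le_trans hdx (A.inf_le_right _ _))) hxy).2

end LatticeEffectAlgebra

/-- (NG7) holds in `(E;·,',0,1)` for a lattice effect algebra `E` with
`x·y := ((x'∧y)⊕y')'`: `[(a·b')'·b']'·c = [((a·c)·(b·c)')'·(b·c)']'`. -/
theorem ng7_holds {E : Type*} (A : LatticeEffectAlgebra E) (a b c : E) :
    A.prod (A.compl (A.prod (A.compl (A.prod a (A.compl b))) (A.compl b))) c =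
    A.compl (A.prod (A.compl (A.prod (A.prod a c) (A.compl (A.prod b c))))
      (A.compl (A.prod b c))) := by
  rw [A.prod_compl_prod, A.prod_compl_prod]
  simp only [LatticeEffectAlgebra.prod, A.compl_compl]
  rw [A.inf_inf_add_compl]
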